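/- Let n ≥ 1 and f ∈ LCₙ. Then: (1) for every t > 0 the function x ↦ sup_{z ∈ tB} f(x − z) is integrable on ℝⁿ; (2) for every s > 0 the superlevel set K_s = {f ≥ s} is compact and convex, and the right derivative S(s) := lim_{t→0⁺} (vol(K_s + tB) − vol(K_s))/t exists (with S(s) = 0 when K_s = ∅); and (3) the first quermassintegral W₁(f) = δ(f, 1_B) exists and satisfies W₁(f) = ∫₀^∞ S(s) ds. -/

import Mathlib

open MeasureTheory Filter Set Metric
open scoped Topology NNReal ENNReal Pointwise

noncomputable section

abbrev Euc (n : ℕ) := EuclideanSpace ℝ (Fin n)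

/-- `f` is log-concave: `f((1-λ)x + λy) ≥ f(x)^{1-λ} f(y)^λ`. -/
def IsLogConcaveFn {n : ℕ} (f : Euc n → ℝ) : Prop :=
  ∀ x y : Euc n, ∀ a b : ℝ, 0 ≤ a → 0 ≤ b → a + b = 1 →
    (f x) ^ a * (f y) ^ b ≤ f (a • x + b • y)

/-- The class `LCₙ`. -/
structure MemLC {n : ℕ} (f : Euc n → ℝ) : Prop where
  nonneg : ∀ x, 0 ≤ f x
  usc : UpperSemicontinuous f
  logConcave : IsLogConcaveFn f
  nonzero : ∃ x, 0 < f x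
  tendsto_zero : Tendsto f (cocompact (Euc n)) (𝓝 0)
  support_interior : (interior {x | 0 < f x}).Nonempty

/-- `(f ⋆ (t·1_C))(x) = sup_{z ∈ tC} f(x − z)`. -/
def indSup {n : ℕ} (f : Euc n → ℝ) (C : Set (Euc n)) (t : ℝ) (x : Euc n) : ℝ :=
  ⨆ z ∈ t • C, f (x - z)

/-- The first variation `δ(f, 1_C)` exists and equals `a`. -/
def HasVarInd {n : ℕ} (f : Euc n → ℝ) (C : Set (Euc n)) (a : ℝ) : Prop :=
  Tendsto (fun t : ℝ => ((∫ x, indSup f C t x) - ∫ x, f x) / t)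
    (𝓝[>] (0 : ℝ)) (𝓝 a)

/-!
Let `p` be the nearest-point projection onto a closed convex set `K`. For `c ≥ 1` the dilation
`x ↦ p x + c (x - p x)` along the normals of `K` is injective and maps `(K + tB) \ K` into
`(K + ctB) \ K`. At a point of differentiability it stretches the normal direction by `c` and
shortens no tangential vector, so its Jacobian is at least `c`. By the area formula
`c vol((K + tB) \ K) ≤ vol((K + ctB) \ K)`; that is, `t ↦ (vol(K + tB) - vol K) / t` is monotone.

The superlevel sets of `x ↦ sup_{z ∈ tB} f (x - z)` are `K_s + tB` with `K_s = {f ≥ s}`. The layer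
cake formula therefore writes the difference quotient of the total mass as the integral over
`s > 0` of the quotients `(vol(K_s + tB) - vol K_s) / t`, and these decrease as `t ↓ 0`, so the
limit passes under the integral.
-/

open scoped RealInnerProductSpace

section Determinant

variable {E : Type*} [NormedAddCommGroup E] [InnerProductSpace ℝ E] [FiniteDimensional ℝ E]

lemma one_le_abs_det_of_norm_le {M : E →ₗ[ℝ] E} (hM : ∀ v, ‖v‖ ≤ ‖M v‖) :
    1 ≤ |LinearMap.det M| := by
  borelize E
  have hinj : Function.Injective M := by
    refine (injective_iff_map_eq_zero M).2 fun v hv => norm_le_zero_iff.1 ?_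
    simpa only [hv, norm_zero] using hM v
  have hsub : ball (0 : E) 1 ⊆ M '' ball 0 1 := by
    intro y hy
    obtain ⟨x, rfl⟩ := LinearMap.injective_iff_surjective.1 hinj y
    rw [mem_ball_zero_iff] at hy
    exact ⟨x, mem_ball_zero_iff.2 ((hM x).trans_lt hy), rfl⟩
  have hvol : volume (ball (0 : E) 1) ≤
      ENNReal.ofReal |LinearMap.det M| * volume (ball (0 : E) 1) :=
    (measure_mono hsub).trans_eq (Measure.addHaar_image_linearMap _ _ _)
  have hone : 1 ≤ ENNReal.ofReal |LinearMap.det M| := by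
    rwa [← ENNReal.mul_le_mul_iff_left (measure_ball_pos volume (0 : E) one_pos).ne'
      measure_ball_lt_top.ne, one_mul]
  exact ENNReal.one_le_ofReal.1 hone

lemma abs_le_abs_det_of_eigenvector {M : E →ₗ[ℝ] E} {u : E} {c : ℝ} (hu : u ≠ 0)
    (hMu : M u = c • u) (hperp : ∀ v, ⟪u, v⟫ = 0 → ⟪u, M v⟫ = 0)
    (hexp : ∀ v, ⟪u, v⟫ = 0 → ‖v‖ ≤ ‖M v‖) : |c| ≤ |LinearMap.det M| := by
  obtain rfl | hc := eq_or_ne c 0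
  · simp
  have huu : ⟪u, u⟫ ≠ 0 := inner_self_ne_zero.2 hu
  let φ : Module.Dual ℝ E := ⟪u, u⟫⁻¹ • (innerSL ℝ u).toLinearMap
  have hφ : ∀ v, φ v = ⟪u, u⟫⁻¹ * ⟪u, v⟫ := fun v => rfl
  -- `R` divides the component along `u` by `c`, so that `M ∘ R` shortens no vector at all.
  let R : E →ₗ[ℝ] E := LinearMap.transvection φ ((c⁻¹ - 1) • u)
  have hφu : φ u = 1 := by rw [hφ, inv_mul_cancel₀ huu]
  have hdetR : LinearMap.det R = c⁻¹ := by
    rw [LinearMap.transvection.det, map_smul, hφu, smul_eq_mul, mul_one, add_sub_cancel]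
  have hMR : ∀ v, ‖v‖ ≤ ‖(M ∘ₗ R) v‖ := by
    intro v
    set w : E := v - φ v • u with hw
    have hv : v = φ v • u + w := by rw [hw]; abel
    have huw : ⟪u, w⟫ = 0 := by
      rw [hw, inner_sub_right, real_inner_smul_right, hφ, mul_right_comm, inv_mul_cancel₀ huu,
        one_mul, sub_self]
    have hMRv : (M ∘ₗ R) v = φ v • u + M w := by
      rw [LinearMap.comp_apply, LinearMap.transvection.apply, hw]
      simp only [map_add, map_sub, map_smul, hMu]
      match_scalars <;> field_simp
      ring
    rw [hMRv, ← sq_le_sq₀ (norm_nonneg _) (norm_nonneg _), sq, sq]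
    nth_rw 1 2 [hv]
    rw [norm_add_sq_eq_norm_sq_add_norm_sq_real (by rw [real_inner_smul_left, huw, mul_zero]),
      norm_add_sq_eq_norm_sq_add_norm_sq_real
        (by rw [real_inner_smul_left, hperp w huw, mul_zero])]
    gcongr <;> exact hexp w huw
  have hdet := one_le_abs_det_of_norm_le hMR
  rwa [LinearMap.det_comp, hdetR, abs_mul, abs_inv, ← div_eq_mul_inv,
    one_le_div (abs_pos.2 hc)] at hdet

end Determinant

section Projection

variable {E : Type*} [NormedAddCommGroup E] [InnerProductSpace ℝ E] {K : Set E} {p : E → E}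

lemma norm_le_norm_of_sq_le_inner {a b : E} (h : ‖a‖ ^ 2 ≤ ⟪b, a⟫) : ‖a‖ ≤ ‖b‖ := by
  obtain ha | ha := (norm_nonneg a).eq_or_lt
  · exact ha ▸ norm_nonneg b
  · exact le_of_mul_le_mul_right ((sq ‖a‖).symm.trans_le (h.trans (real_inner_le_norm b a))) ha

/-- `p` is the metric (nearest-point) projection onto the convex set `K`, characterised by the
variational inequality instead of by minimality of the distance. -/
structure IsMetricProjection (K : Set E) (p : E → E) : Prop where
  mem : ∀ x, p x ∈ K
  inner_le_zero : ∀ x, ∀ w ∈ K, ⟪x - p x, w - p x⟫ ≤ 0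

lemma exists_isMetricProjection (hne : K.Nonempty) (hK : IsComplete K) (hc : Convex ℝ K) :
    ∃ p, IsMetricProjection K p := by
  choose p hpK hp using exists_norm_eq_iInf_of_complete_convex hne hK hc
  exact ⟨p, hpK, fun x => (norm_eq_iInf_iff_real_inner_le_zero hc (hpK x)).1 (hp x)⟩

/-- The dilation by the factor `c` along the normals of `K`, where `p` is the metric projection
onto `K`. -/
def normalDilation (p : E → E) (c : ℝ) (x : E) : E := p x + c • (x - p x)

lemma normalDilation_sub (p : E → E) (c : ℝ) (x : E) :
    normalDilation p c x - p x = c • (x - p x) := add_sub_cancel_left _ _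

lemma normalDilation_one (p : E → E) (x : E) : normalDilation p 1 x = x := by
  rw [normalDilation, one_smul, add_sub_cancel]

namespace IsMetricProjection

lemma norm_apply_sub_apply_sq_le (hp : IsMetricProjection K p) (x y : E) :
    ‖p x - p y‖ ^ 2 ≤ ⟪x - y, p x - p y⟫ := by
  have hx := hp.inner_le_zero x (p y) (hp.mem y)
  have hy := hp.inner_le_zero y (p x) (hp.mem x)
  have hsum : ⟪x - y, p x - p y⟫ - ⟪p x - p y, p x - p y⟫ =
      -(⟪x - p x, p y - p x⟫ + ⟪y - p y, p x - p y⟫) := by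
    simp only [inner_sub_left, inner_sub_right]; ring
  rw [real_inner_self_eq_norm_sq] at hsum
  linarith

lemma lipschitzWith (hp : IsMetricProjection K p) : LipschitzWith 1 p :=
  LipschitzWith.of_dist_le_mul fun x y => by
    simpa only [dist_eq_norm, NNReal.coe_one, one_mul] using
      norm_le_norm_of_sq_le_inner (hp.norm_apply_sub_apply_sq_le x y)

lemma norm_sub_apply_le (hp : IsMetricProjection K p) (x : E) {k : E} (hk : k ∈ K) :
    ‖x - p x‖ ≤ ‖x - k‖ := by
  refine norm_le_norm_of_sq_le_inner ?_
  have hinner := hp.inner_le_zero x k hk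
  have hsplit : x - k = (x - p x) - (k - p x) := by abel
  rw [hsplit, inner_sub_left, real_inner_self_eq_norm_sq, real_inner_comm]
  linarith

lemma apply_eq_of_forall_inner_le_zero (hp : IsMetricProjection K p) {x q : E} (hq : q ∈ K)
    (h : ∀ w ∈ K, ⟪x - q, w - q⟫ ≤ 0) : p x = q := by
  have hpx := h _ (hp.mem x)
  have hqx := hp.inner_le_zero x q hq
  have hsum : ⟪p x - q, p x - q⟫ = ⟪x - q, p x - q⟫ + ⟪x - p x, q - p x⟫ := by
    simp only [inner_sub_left, inner_sub_right]; ring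
  exact sub_eq_zero.1 (real_inner_self_nonpos.1 (by linarith))

lemma apply_of_mem (hp : IsMetricProjection K p) {x : E} (hx : x ∈ K) : p x = x :=
  hp.apply_eq_of_forall_inner_le_zero hx fun w _ => by rw [sub_self, inner_zero_left]

lemma apply_normalDilation (hp : IsMetricProjection K p) {c : ℝ} (hc : 0 ≤ c) (x : E) :
    p (normalDilation p c x) = p x := by
  refine hp.apply_eq_of_forall_inner_le_zero (hp.mem x) fun w hw => ?_
  rw [normalDilation_sub, real_inner_smul_left]
  exact mul_nonpos_of_nonneg_of_nonpos hc (hp.inner_le_zero x w hw)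

lemma injective_normalDilation (hp : IsMetricProjection K p) {c : ℝ} (hc : 0 < c) :
    Function.Injective (normalDilation p c) := by
  intro x y hxy
  have hpxy : p x = p y := by
    rw [← hp.apply_normalDilation hc.le x, hxy, hp.apply_normalDilation hc.le]
  have hsub : c • (x - p x) = c • (y - p x) := by
    rw [← normalDilation_sub, hxy, hpxy, normalDilation_sub]
  exact sub_left_injective (smul_right_injective E hc.ne' hsub)

lemma mapsTo_normalDilation_shell [ProperSpace E] (hp : IsMetricProjection K p)
    (hK : IsClosed K) {c t : ℝ} (hc : 0 < c) (ht : 0 ≤ t) :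
    MapsTo (normalDilation p c) (cthickening t K \ K) (cthickening (c * t) K \ K) := by
  rintro x ⟨hxt, hxK⟩
  constructor
  · rw [hK.cthickening_eq_biUnion_closedBall ht] at hxt
    obtain ⟨k, hk, hxk⟩ := mem_iUnion₂.1 hxt
    refine mem_cthickening_of_dist_le _ (p x) _ _ (hp.mem x) ?_
    rw [dist_eq_norm, normalDilation_sub, norm_smul, Real.norm_of_nonneg hc.le]
    gcongr
    exact (hp.norm_sub_apply_le x hk).trans (mem_closedBall_iff_norm.1 hxk)
  · intro hmem
    have hfix : normalDilation p c x = normalDilation p c (p x) := by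
      rw [← hp.apply_of_mem hmem, hp.apply_normalDilation hc.le, normalDilation,
        hp.apply_of_mem (hp.mem x), sub_self, smul_zero, add_zero]
    exact hxK (hp.injective_normalDilation hc hfix ▸ hp.mem x)

lemma inner_fderiv_eq_zero (hp : IsMetricProjection K p) {x : E} {D : E →L[ℝ] E}
    (hD : HasFDerivAt p D x) (v : E) : ⟪x - p x, D v⟫ = 0 := by
  have hmax : IsLocalMax (fun y => ⟪x - p x, p y⟫) x := by
    refine Eventually.of_forall fun y => ?_
    have hle := hp.inner_le_zero x (p y) (hp.mem y)
    rwa [inner_sub_right, sub_nonpos] at hle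
  have hzero := hmax.hasFDerivAt_eq_zero ((innerSL ℝ (x - p x)).hasFDerivAt.comp x hD)
  exact DFunLike.congr_fun hzero v

lemma fderiv_apply_sub_eq_zero (hp : IsMetricProjection K p) {x : E} {D : E →L[ℝ] E}
    (hD : HasFDerivAt p D x) : D (x - p x) = 0 := by
  have hray : HasDerivAt (fun c => normalDilation p c x) (x - p x) 1 := by
    simpa only [one_smul] using!
      ((hasDerivAt_id (1 : ℝ)).smul_const (x - p x)).const_add (p x)
  have hcomp : HasDerivAt (fun c => p (normalDilation p c x)) (D (x - p x)) 1 :=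
    HasFDerivAt.comp_hasDerivAt (l := p) 1 ((normalDilation_one p x).symm ▸ hD) hray
  have hconst : (fun c => p (normalDilation p c x)) =ᶠ[𝓝 1] fun _ => p x := by
    filter_upwards [Ici_mem_nhds one_pos] with c hc using hp.apply_normalDilation hc x
  exact hcomp.unique ((hasDerivAt_const 1 (p x)).congr_of_eventuallyEq hconst)

lemma le_abs_det_fderiv_normalDilation [FiniteDimensional ℝ E] (hp : IsMetricProjection K p)
    {x : E} (hx : x ∉ K) {D : E →L[ℝ] E} (hD : HasFDerivAt p D x) {c : ℝ} (hc : 1 ≤ c) :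
    c ≤ |(D + c • (ContinuousLinearMap.id ℝ E - D)).det| := by
  have hne : x - p x ≠ 0 := fun h => hx (sub_eq_zero.1 h ▸ hp.mem x)
  refine (le_abs_self c).trans (abs_le_abs_det_of_eigenvector hne ?_ ?_ ?_)
  · simp [hp.fderiv_apply_sub_eq_zero hD]
  · intro v hv
    simp [inner_add_right, inner_sub_right, real_inner_smul_right, hp.inner_fderiv_eq_zero hD, hv]
  · intro v _
    have hDv : ‖D v‖ ≤ ‖v‖ := by
      simpa using D.le_of_opNorm_le (hD.le_of_lipschitz hp.lipschitzWith) v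
    calc ‖v‖ ≤ c * ‖v‖ - (c - 1) * ‖D v‖ := by nlinarith
      _ = ‖c • v‖ - ‖(c - 1) • D v‖ := by
        rw [norm_smul, norm_smul, Real.norm_of_nonneg (by linarith),
          Real.norm_of_nonneg (by linarith)]
      _ ≤ ‖c • v - (c - 1) • D v‖ := norm_sub_norm_le _ _
      _ = ‖D v + c • (v - D v)‖ := by congr 1; module

end IsMetricProjection

end Projection

section ParallelVolume

lemma ofReal_mul_measure_le_measure_image {E : Type*} [NormedAddCommGroup E]
    [NormedSpace ℝ E] [FiniteDimensional ℝ E] [MeasurableSpace E] [BorelSpace E]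
    (μ : Measure E) [μ.IsAddHaarMeasure] {A : Set E} (hA : MeasurableSet A) {T : E → E}
    {T' : E → E →L[ℝ] E} (hT : ∀ x ∈ A, HasFDerivWithinAt T (T' x) A x)
    (hinj : InjOn T A) {c : ℝ} (hc : ∀ x ∈ A, c ≤ |(T' x).det|) :
    ENNReal.ofReal c * μ A ≤ μ (T '' A) :=
  calc ENNReal.ofReal c * μ A = ∫⁻ _ in A, ENNReal.ofReal c ∂μ := (setLIntegral_const A _).symm
    _ ≤ ∫⁻ x in A, ENNReal.ofReal |(T' x).det| ∂μ :=
      setLIntegral_mono' hA fun x hx => ENNReal.ofReal_le_ofReal (hc x hx)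
    _ = μ (T '' A) := lintegral_abs_det_fderiv_eq_addHaar_image μ hA hT hinj

section NormedSpace

variable {E : Type*} [NormedAddCommGroup E] [NormedSpace ℝ E] [MeasurableSpace E]
  (μ : Measure E) {K : Set E} {t : ℝ}

/-- The difference quotient `(μ(K + tB) - μ(K)) / t` of the volume of the parallel bodies. -/
def parallelQuotient (K : Set E) (t : ℝ) : ℝ :=
  (μ.real (K + t • closedBall 0 1) - μ.real K) / t

/-- The surface area (outer Minkowski content) of `K` with respect to `μ`: the right derivative
at `0` of `t ↦ μ(K + tB)`. It is meaningful only when `parallelQuotient μ K` converges at `0⁺`. -/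
def surfaceArea (K : Set E) : ℝ := limUnder (𝓝[>] 0) (parallelQuotient μ K)

variable {μ}

lemma parallelQuotient_eq_cthickening (hK : IsCompact K) (ht : 0 ≤ t) :
    parallelQuotient μ K t = (μ.real (cthickening t K) - μ.real K) / t := by
  rw [parallelQuotient, smul_unitClosedBall_of_nonneg ht, hK.add_closedBall_zero ht]

variable [BorelSpace E] [ProperSpace E] [IsFiniteMeasureOnCompacts μ]

lemma parallelQuotient_eq_shell (hK : IsCompact K) (ht : 0 ≤ t) :
    parallelQuotient μ K t = μ.real (cthickening t K \ K) / t := by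
  rw [parallelQuotient_eq_cthickening hK ht, measureReal_sdiff (self_subset_cthickening K)
    hK.measurableSet hK.cthickening.measure_lt_top.ne]

lemma parallelQuotient_nonneg (hK : IsCompact K) (ht : 0 ≤ t) : 0 ≤ parallelQuotient μ K t := by
  rw [parallelQuotient_eq_shell hK ht]
  positivity

end NormedSpace

variable {E : Type*} [NormedAddCommGroup E] [InnerProductSpace ℝ E] [FiniteDimensional ℝ E]
  [MeasurableSpace E] [BorelSpace E] {K : Set E}

lemma ofReal_mul_measure_shell_le (μ : Measure E) [μ.IsAddHaarMeasure] (hK : IsClosed K)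
    (hconv : Convex ℝ K) {c t : ℝ} (hc : 1 ≤ c) (ht : 0 ≤ t) :
    ENNReal.ofReal c * μ (cthickening t K \ K) ≤ μ (cthickening (c * t) K \ K) := by
  obtain rfl | hne := K.eq_empty_or_nonempty
  · simp
  obtain ⟨p, hp⟩ := exists_isMetricProjection hne hK.isComplete hconv
  have hc0 : 0 < c := one_pos.trans_le hc
  let A : Set E := (cthickening t K \ K) ∩ {x | DifferentiableAt ℝ p x}
  have hA : MeasurableSet A :=
    (isClosed_cthickening.measurableSet.diff hK.measurableSet).inter
      (measurableSet_of_differentiableAt ℝ p)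
  have hAE : μ A = μ (cthickening t K \ K) :=
    measure_inter_conull hp.lipschitzWith.ae_differentiableAt
  have hderiv : ∀ x ∈ A, HasFDerivAt p (fderiv ℝ p x) x := fun x hx => hx.2.hasFDerivAt
  calc ENNReal.ofReal c * μ (cthickening t K \ K) = ENNReal.ofReal c * μ A := by rw [hAE]
    _ ≤ μ (normalDilation p c '' A) :=
      ofReal_mul_measure_le_measure_image μ hA
        (fun x hx => ((hderiv x hx).add
          (((hasFDerivAt_id x).sub (hderiv x hx)).const_smul c)).hasFDerivWithinAt)
        (hp.injective_normalDilation hc0).injOn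
        fun x hx => hp.le_abs_det_fderiv_normalDilation hx.1.2 (hderiv x hx) hc
    _ ≤ μ (cthickening (c * t) K \ K) :=
      measure_mono ((hp.mapsTo_normalDilation_shell hK hc0 ht).mono_left
        inter_subset_left).image_subset

variable {μ : Measure E} [μ.IsAddHaarMeasure]

lemma monotoneOn_parallelQuotient (hK : IsCompact K) (hconv : Convex ℝ K) :
    MonotoneOn (parallelQuotient μ K) (Ioi 0) := by
  intro a ha b hb hab
  rw [mem_Ioi] at ha hb
  have hshell := ofReal_mul_measure_shell_le μ hK.isClosed hconv ((one_le_div ha).2 hab) ha.le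
  rw [div_mul_cancel₀ _ ha.ne'] at hshell
  have hfin : μ (cthickening b K \ K) ≠ ∞ :=
    measure_ne_top_of_subset sdiff_subset hK.cthickening.measure_lt_top.ne
  have hreal : b / a * μ.real (cthickening a K \ K) ≤ μ.real (cthickening b K \ K) := by
    simpa only [measureReal_def, ENNReal.toReal_mul,
      ENNReal.toReal_ofReal (div_nonneg hb.le ha.le)] using ENNReal.toReal_mono hfin hshell
  rw [parallelQuotient_eq_shell hK ha.le, parallelQuotient_eq_shell hK hb.le, le_div_iff₀ hb]
  exact (div_mul_comm _ _ _).trans_le hreal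

lemma tendsto_parallelQuotient (hK : IsCompact K) (hconv : Convex ℝ K) :
    Tendsto (parallelQuotient μ K) (𝓝[>] 0) (𝓝 (surfaceArea μ K)) := by
  have hbdd : BddBelow (parallelQuotient μ K '' Ioi 0) :=
    ⟨0, forall_mem_image.2 fun _ ht => parallelQuotient_nonneg hK (mem_Ioi.1 ht).le⟩
  exact tendsto_nhds_limUnder ⟨_, (monotoneOn_parallelQuotient hK hconv).tendsto_nhdsGT hbdd⟩

end ParallelVolume

section MonotoneConvergence

variable {α : Type*} [MeasurableSpace α] {μ : Measure α}

lemma tendsto_integral_nhdsGT_of_monotoneOn {Q : ℝ → α → ℝ} {L : α → ℝ}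
    (hint : ∀ t, 0 < t → Integrable (Q t) μ) (hnonneg : ∀ᵐ a ∂μ, ∀ t, 0 < t → 0 ≤ Q t a)
    (hmono : ∀ᵐ a ∂μ, MonotoneOn (Q · a) (Ioi 0))
    (hlim : ∀ᵐ a ∂μ, Tendsto (Q · a) (𝓝[>] 0) (𝓝 (L a))) :
    Tendsto (fun t => ∫ a, Q t a ∂μ) (𝓝[>] 0) (𝓝 (∫ a, L a ∂μ)) := by
  refine tendsto_integral_filter_of_dominated_convergence (Q 1) ?_ ?_ (hint 1 one_pos) hlim
  · filter_upwards [self_mem_nhdsWithin] with t ht using (hint t ht).aestronglyMeasurable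
  · filter_upwards [Ioo_mem_nhdsGT one_pos] with t ht
    filter_upwards [hnonneg, hmono] with a ha0 hmono_a
    rw [Real.norm_of_nonneg (ha0 t ht.1)]
    exact hmono_a ht.1 (mem_Ioi.2 one_pos) ht.2.le

lemma integrableOn_measureReal_superlevel {g : α → ℝ} (hg : Integrable g μ)
    (hg0 : 0 ≤ᵐ[μ] g) : IntegrableOn (fun s => μ.real {x | s ≤ g x}) (Ioi 0) := by
  have hanti : Antitone fun s => μ {x | s ≤ g x} := fun _ _ hab =>
    measure_mono fun _ hx => le_trans hab hx
  refine integrable_toReal_of_lintegral_ne_top hanti.measurable.aemeasurable ?_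
  rw [← lintegral_eq_lintegral_meas_le μ hg0 hg.aemeasurable]
  exact hg.lintegral_lt_top.ne

end MonotoneConvergence

section LogConcave

lemma isCompact_superlevel {X : Type*} [TopologicalSpace X] {f : X → ℝ}
    (husc : UpperSemicontinuous f) (h0 : Tendsto f (cocompact X) (𝓝 0)) {s : ℝ} (hs : 0 < s) :
    IsCompact {x | s ≤ f x} := by
  obtain ⟨C, hC, hsub⟩ := mem_cocompact.1 (h0.eventually_lt_const hs)
  refine hC.of_isClosed_subset (husc.isClosed_preimage s) fun x hx => ?_
  by_contra hxC
  have hlt : f x < s := hsub hxC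
  exact hlt.not_ge hx

lemma bddAbove_range_of_tendsto_cocompact {X : Type*} [TopologicalSpace X] {f : X → ℝ}
    (husc : UpperSemicontinuous f) (h0 : Tendsto f (cocompact X) (𝓝 0)) :
    BddAbove (range f) := by
  obtain ⟨M, hM⟩ := (husc.upperSemicontinuousOn _).bddAbove_of_isCompact
    (isCompact_superlevel husc h0 one_pos)
  refine ⟨max M 1, forall_mem_range.2 fun x => ?_⟩
  obtain hx | hx := le_total 1 (f x)
  · exact le_max_of_le_left (hM (mem_image_of_mem f hx))
  · exact le_max_of_le_right hx

/-- Log-concavity of a function on a real vector space, as in `IsLogConcaveFn`. -/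
def LogConcave {E : Type*} [AddCommMonoid E] [Module ℝ E] (f : E → ℝ) : Prop :=
  ∀ x y : E, ∀ a b : ℝ, 0 ≤ a → 0 ≤ b → a + b = 1 → f x ^ a * f y ^ b ≤ f (a • x + b • y)

lemma LogConcave.convex_superlevel {E : Type*} [AddCommMonoid E] [Module ℝ E] {f : E → ℝ}
    (hf : LogConcave f) {s : ℝ} (hs : 0 < s) : Convex ℝ {x | s ≤ f x} := by
  intro x (hx : s ≤ f x) y (hy : s ≤ f y) a b ha hb hab
  calc s = s ^ a * s ^ b := by rw [← Real.rpow_add hs, hab, Real.rpow_one]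
    _ ≤ f x ^ a * f y ^ b := by have := hs.trans_le hx; gcongr
    _ ≤ f (a • x + b • y) := hf x y a b ha hb hab

variable {E : Type*} [NormedAddCommGroup E] [NormedSpace ℝ E] {f : E → ℝ}

lemma LogConcave.le_mul_exp_of_forall_sphere (hf : LogConcave f) {x₀ : E} (hx₀ : 0 < f x₀)
    {R : ℝ} (hR : 0 < R) (hsphere : ∀ y ∈ sphere x₀ R, f y ≤ f x₀ * Real.exp (-1)) {x : E}
    (hx : R ≤ ‖x - x₀‖) : f x ≤ f x₀ * Real.exp (-(R⁻¹ * ‖x - x₀‖)) := by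
  obtain hfx | hfx := le_or_gt (f x) 0
  · exact hfx.trans (by positivity)
  have hr : 0 < ‖x - x₀‖ := hR.trans_le hx
  set θ : ℝ := R / ‖x - x₀‖ with hθ
  have hθ0 : 0 < θ := div_pos hR hr
  have hθ1 : θ ≤ 1 := (div_le_one hr).2 hx
  set y : E := (1 - θ) • x₀ + θ • x with hy_def
  have hy : y ∈ sphere x₀ R := by
    have hsub : y - x₀ = θ • (x - x₀) := by rw [hy_def]; module
    rw [mem_sphere_iff_norm, hsub, norm_smul, Real.norm_of_nonneg hθ0.le, hθ,
      div_mul_cancel₀ _ hr.ne']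
  have hprod : f x₀ ^ (1 - θ) * f x ^ θ ≤ f x₀ * Real.exp (-1) :=
    (hf x₀ x (1 - θ) θ (by linarith) hθ0.le (by ring)).trans (hsphere y hy)
  have hlog : (1 - θ) * Real.log (f x₀) + θ * Real.log (f x) ≤ Real.log (f x₀) - 1 := by
    have hlog_le := Real.log_le_log (by positivity) hprod
    rwa [Real.log_mul (by positivity) (by positivity), Real.log_rpow hx₀, Real.log_rpow hfx,
      Real.log_mul hx₀.ne' (Real.exp_pos _).ne', Real.log_exp] at hlog_le
  have hθinv : R⁻¹ * ‖x - x₀‖ = θ⁻¹ := by rw [hθ, inv_div, div_eq_inv_mul]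
  have hlog_fx : Real.log (f x) ≤ Real.log (f x₀) + -(R⁻¹ * ‖x - x₀‖) := by
    rw [hθinv, ← sub_eq_add_neg, ← mul_le_mul_iff_right₀ hθ0, mul_sub, mul_inv_cancel₀ hθ0.ne']
    linarith
  rwa [← Real.exp_le_exp, Real.exp_add, Real.exp_log hfx, Real.exp_log hx₀] at hlog_fx

lemma LogConcave.exists_le_mul_exp (hf : LogConcave f) (husc : UpperSemicontinuous f)
    (h0 : Tendsto f (cocompact E) (𝓝 0)) :
    ∃ C c : ℝ, 0 < C ∧ 0 < c ∧ ∀ x, f x ≤ C * Real.exp (-(c * ‖x‖)) := by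
  obtain hneg | ⟨x₀, hx₀⟩ : (∀ x, f x ≤ 0) ∨ ∃ x₀, 0 < f x₀ := by
    simpa only [not_lt, not_exists] using (em (∃ x₀, 0 < f x₀)).symm
  · exact ⟨1, 1, one_pos, one_pos, fun x => (hneg x).trans (by positivity)⟩
  obtain ⟨M, hM⟩ := bddAbove_range_of_tendsto_cocompact husc h0
  have hfM : ∀ x, f x ≤ M := fun x => hM (mem_range_self x)
  have hM0 : 0 < M := hx₀.trans_le (hfM x₀)
  obtain ⟨R, hR, hball⟩ := (isCompact_superlevel husc h0
    (mul_pos hx₀ (Real.exp_pos (-1)))).isBounded.subset_ball_lt 0 x₀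
  have hsphere : ∀ y ∈ sphere x₀ R, f y ≤ f x₀ * Real.exp (-1) := fun y hy =>
    (not_le.1 fun hle => (mem_ball.1 (hball hle)).ne hy).le
  have hdecay : ∀ x, f x ≤ M * Real.exp (1 - R⁻¹ * ‖x - x₀‖) := by
    intro x
    obtain hx | hx := le_total ‖x - x₀‖ R
    · refine (hfM x).trans (le_mul_of_one_le_right hM0.le (Real.one_le_exp ?_))
      rwa [sub_nonneg, inv_mul_le_one₀ hR]
    · refine (hf.le_mul_exp_of_forall_sphere hx₀ hR hsphere hx).trans ?_
      gcongr
      · exact hfM x₀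
      · linarith
  refine ⟨M * Real.exp (1 + R⁻¹ * ‖x₀‖), R⁻¹, by positivity, by positivity, fun x => ?_⟩
  rw [mul_assoc, ← Real.exp_add]
  refine (hdecay x).trans ?_
  gcongr
  have htri : R⁻¹ * ‖x‖ ≤ R⁻¹ * (‖x - x₀‖ + ‖x₀‖) := by
    gcongr
    exact norm_le_norm_sub_add x x₀
  linarith

lemma integrable_exp_neg_mul_norm [FiniteDimensional ℝ E] [MeasurableSpace E] [BorelSpace E]
    (μ : Measure E) [μ.IsAddHaarMeasure] {c : ℝ} (hc : 0 < c) :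
    Integrable (fun x : E => Real.exp (-(c * ‖x‖))) μ := by
  set k : ℕ := Module.finrank ℝ E + 1 with hk
  have hjapanese : Integrable (fun x : E => (1 + ‖x‖) ^ (-(k : ℝ))) μ :=
    integrable_one_add_norm (by simp [hk])
  refine (hjapanese.const_mul (Real.exp c * (k.factorial / c ^ k))).mono'
    (by fun_prop) (Eventually.of_forall fun x => ?_)
  have hpow := Real.pow_div_factorial_le_exp (c * (1 + ‖x‖)) (by positivity) k
  rw [Real.norm_of_nonneg (Real.exp_pos _).le, Real.rpow_neg (by positivity), Real.rpow_natCast]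
  calc Real.exp (-(c * ‖x‖)) = Real.exp c * (Real.exp (c * (1 + ‖x‖)))⁻¹ := by
        rw [← Real.exp_neg, ← Real.exp_add]; ring_nf
    _ ≤ Real.exp c * ((c * (1 + ‖x‖)) ^ k / k.factorial)⁻¹ := by gcongr
    _ = Real.exp c * (k.factorial / c ^ k) * ((1 + ‖x‖) ^ k)⁻¹ := by
        rw [mul_pow, inv_div, div_mul_eq_div_div, div_eq_mul_inv _ ((1 + ‖x‖) ^ k), mul_assoc]

end LogConcave

section BallSup

variable {E : Type*} [NormedAddCommGroup E] [NormedSpace ℝ E] {f : E → ℝ} {t : ℝ}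

/-- The Asplund sum of `f` with `t · 1_B`, for `B` the closed unit ball: the case `C = B` of
`indSup`, on a normed space. -/
def ballSup (f : E → ℝ) (t : ℝ) (x : E) : ℝ := ⨆ z ∈ t • closedBall (0 : E) 1, f (x - z)

lemma ballSup_nonneg (hf : ∀ x, 0 ≤ f x) (x : E) : 0 ≤ ballSup f t x :=
  Real.iSup_nonneg fun _ => Real.iSup_nonneg fun _ => hf _

variable [ProperSpace E]

lemma isGreatest_ballSup (husc : UpperSemicontinuous f) (hf : ∀ x, 0 ≤ f x) (ht : 0 ≤ t)
    (x : E) : IsGreatest (f '' closedBall x t) (ballSup f t x) := by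
  obtain ⟨y, hy, hmax⟩ := (husc.upperSemicontinuousOn _).exists_isMaxOn
    (nonempty_closedBall.2 ht) (isCompact_closedBall x t)
  have hle : ∀ z ∈ closedBall (0 : E) t, f (x - z) ≤ f y := fun z hz =>
    hmax (by simpa [dist_eq_norm] using hz)
  have heq : ballSup f t x = f y := by
    rw [ballSup, smul_unitClosedBall_of_nonneg ht]
    refine le_antisymm (Real.iSup_le (fun z => Real.iSup_le (hle z) (hf y)) (hf y)) ?_
    have hbdd : BddAbove (⋃ z, range fun _ : z ∈ closedBall (0 : E) t => f (x - z)) :=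
      ⟨f y, by rintro _ ⟨_, ⟨z, rfl⟩, ⟨hz, rfl⟩⟩; exact hle z hz⟩
    have hxy : x - y ∈ closedBall (0 : E) t := by
      rwa [mem_closedBall_zero_iff, ← mem_closedBall_iff_norm']
    simpa only [sub_sub_cancel] using
      le_ciSup₂ (f := fun z (_ : z ∈ closedBall (0 : E) t) => f (x - z)) hbdd (x - y) hxy
  exact heq ▸ ⟨mem_image_of_mem f hy, forall_mem_image.2 hmax⟩

lemma ballSup_zero (husc : UpperSemicontinuous f) (hf : ∀ x, 0 ≤ f x) : ballSup f 0 = f := by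
  funext x
  refine (isGreatest_ballSup husc hf le_rfl x).unique ?_
  rw [closedBall_zero, image_singleton]
  exact isGreatest_singleton

lemma superlevel_ballSup (husc : UpperSemicontinuous f) (hf : ∀ x, 0 ≤ f x) (ht : 0 ≤ t)
    (s : ℝ) : {x | s ≤ ballSup f t x} = cthickening t {x | s ≤ f x} := by
  have hclosed : IsClosed {x | s ≤ f x} := husc.isClosed_preimage s
  rw [hclosed.cthickening_eq_biUnion_closedBall ht]
  ext x
  obtain ⟨⟨y, hy, hxy⟩, hmax⟩ := isGreatest_ballSup husc hf ht x
  rw [mem_iUnion₂]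
  constructor
  · intro hx
    exact ⟨y, hx.trans_eq hxy.symm, mem_closedBall_comm.1 hy⟩
  · rintro ⟨y, hsy, hy⟩
    exact hsy.trans (hmax (mem_image_of_mem f (mem_closedBall_comm.1 hy)))

lemma measurable_ballSup [MeasurableSpace E] [BorelSpace E] (husc : UpperSemicontinuous f)
    (hf : ∀ x, 0 ≤ f x) (ht : 0 ≤ t) : Measurable (ballSup f t) :=
  measurable_of_Ici fun s =>
    (superlevel_ballSup husc hf ht s ▸ isClosed_cthickening.measurableSet :
      MeasurableSet {x | s ≤ ballSup f t x})

lemma ballSup_le_mul_exp (husc : UpperSemicontinuous f) (hf : ∀ x, 0 ≤ f x) (ht : 0 ≤ t)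
    {C c : ℝ} (hC : 0 ≤ C) (hc : 0 ≤ c) (hdecay : ∀ x, f x ≤ C * Real.exp (-(c * ‖x‖))) (x : E) :
    ballSup f t x ≤ C * Real.exp (c * t) * Real.exp (-(c * ‖x‖)) := by
  obtain ⟨y, hy, hxy⟩ := (isGreatest_ballSup husc hf ht x).1
  have hnorm : c * ‖x‖ ≤ c * (t + ‖y‖) := by
    gcongr
    have htri := norm_le_norm_sub_add x y
    rw [mem_closedBall_iff_norm'] at hy
    linarith
  rw [← hxy, mul_assoc, ← Real.exp_add]
  refine (hdecay y).trans ?_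
  gcongr
  linarith

end BallSup

/-- A log-concave function `exp (-φ)` with `φ` convex, lower semicontinuous and coercive. This is
the class `LCₙ` on a normed space, enlarged by the functions that vanish off a hyperplane or
everywhere. -/
structure CoerciveLogConcave {E : Type*} [NormedAddCommGroup E] [NormedSpace ℝ E] (f : E → ℝ) :
    Prop where
  nonneg : ∀ x, 0 ≤ f x
  usc : UpperSemicontinuous f
  logConcave : LogConcave f
  tendsto_zero : Tendsto f (cocompact E) (𝓝 0)

namespace CoerciveLogConcave

variable {E : Type*} [NormedAddCommGroup E] [NormedSpace ℝ E] [MeasurableSpace E]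
  {μ : Measure E} {f : E → ℝ} {t : ℝ}

lemma parallelQuotient_superlevel (hf : CoerciveLogConcave f) (ht : 0 ≤ t) {s : ℝ} (hs : 0 < s) :
    parallelQuotient μ {x | s ≤ f x} t =
      (μ.real (cthickening t {x | s ≤ f x}) - μ.real {x | s ≤ f x}) / t :=
  parallelQuotient_eq_cthickening (isCompact_superlevel hf.usc hf.tendsto_zero hs) ht

variable [FiniteDimensional ℝ E] [BorelSpace E] [μ.IsAddHaarMeasure]

lemma integrable_ballSup (hf : CoerciveLogConcave f) (ht : 0 ≤ t) :
    Integrable (ballSup f t) μ := by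
  obtain ⟨C, c, hC, hc, hdecay⟩ := hf.logConcave.exists_le_mul_exp hf.usc hf.tendsto_zero
  refine ((integrable_exp_neg_mul_norm μ hc).const_mul (C * Real.exp (c * t))).mono'
    (measurable_ballSup hf.usc hf.nonneg ht).aestronglyMeasurable
    (Eventually.of_forall fun x => ?_)
  rw [Real.norm_of_nonneg (ballSup_nonneg hf.nonneg x)]
  exact ballSup_le_mul_exp hf.usc hf.nonneg ht hC.le hc.le hdecay x

lemma integrableOn_measureReal_cthickening (hf : CoerciveLogConcave f) (ht : 0 ≤ t) :
    IntegrableOn (fun s => μ.real (cthickening t {x | s ≤ f x})) (Ioi 0) := by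
  simp_rw [← superlevel_ballSup hf.usc hf.nonneg ht]
  exact integrableOn_measureReal_superlevel (hf.integrable_ballSup ht)
    (Eventually.of_forall (ballSup_nonneg hf.nonneg))

lemma integral_ballSup (hf : CoerciveLogConcave f) (ht : 0 ≤ t) :
    ∫ x, ballSup f t x ∂μ = ∫ s in Ioi 0, μ.real (cthickening t {x | s ≤ f x}) := by
  simp_rw [← superlevel_ballSup hf.usc hf.nonneg ht]
  exact (hf.integrable_ballSup ht).integral_eq_integral_meas_le
    (Eventually.of_forall (ballSup_nonneg hf.nonneg))

lemma integrable (hf : CoerciveLogConcave f) : Integrable f μ :=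
  ballSup_zero hf.usc hf.nonneg ▸ hf.integrable_ballSup le_rfl

lemma integrableOn_parallelQuotient (hf : CoerciveLogConcave f) (ht : 0 ≤ t) :
    IntegrableOn (fun s => parallelQuotient μ {x | s ≤ f x} t) (Ioi 0) := by
  have hsuper : IntegrableOn (fun s => μ.real {x | s ≤ f x}) (Ioi 0) :=
    integrableOn_measureReal_superlevel hf.integrable (Eventually.of_forall hf.nonneg)
  exact IntegrableOn.congr_fun
    (((hf.integrableOn_measureReal_cthickening ht).sub hsuper).div_const t)
    (fun _ hs => (hf.parallelQuotient_superlevel ht hs).symm) measurableSet_Ioi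

lemma integral_parallelQuotient (hf : CoerciveLogConcave f) (ht : 0 ≤ t) :
    ∫ s in Ioi 0, parallelQuotient μ {x | s ≤ f x} t =
      ((∫ x, ballSup f t x ∂μ) - ∫ x, f x ∂μ) / t := by
  have hf0 : 0 ≤ᵐ[μ] f := Eventually.of_forall hf.nonneg
  rw [setIntegral_congr_fun measurableSet_Ioi fun _ hs => hf.parallelQuotient_superlevel ht hs,
    integral_div, integral_sub (hf.integrableOn_measureReal_cthickening ht)
      (integrableOn_measureReal_superlevel hf.integrable hf0), hf.integral_ballSup ht,
    hf.integrable.integral_eq_integral_meas_le hf0]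

end CoerciveLogConcave

theorem stmt4_general {E : Type*} [NormedAddCommGroup E] [InnerProductSpace ℝ E]
    [FiniteDimensional ℝ E] [MeasurableSpace E] [BorelSpace E] (μ : Measure E)
    [μ.IsAddHaarMeasure] {f : E → ℝ} (hf : CoerciveLogConcave f) :
    (∀ t, 0 < t → Integrable (ballSup f t) μ) ∧
    (∀ s, 0 < s → IsCompact {x | s ≤ f x} ∧ Convex ℝ {x | s ≤ f x}) ∧
    (∀ s, 0 < s → Tendsto (parallelQuotient μ {x | s ≤ f x}) (𝓝[>] 0)
      (𝓝 (surfaceArea μ {x | s ≤ f x}))) ∧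
    Tendsto (fun t => ((∫ x, ballSup f t x ∂μ) - ∫ x, f x ∂μ) / t) (𝓝[>] 0)
      (𝓝 (∫ s in Ioi 0, surfaceArea μ {x | s ≤ f x})) := by
  have hcompact : ∀ s, 0 < s → IsCompact {x | s ≤ f x} := fun s hs =>
    isCompact_superlevel hf.usc hf.tendsto_zero hs
  have hconvex : ∀ s, 0 < s → Convex ℝ {x | s ≤ f x} := fun s hs =>
    hf.logConcave.convex_superlevel hs
  have hlim : ∀ s, 0 < s → Tendsto (parallelQuotient μ {x | s ≤ f x}) (𝓝[>] 0)
      (𝓝 (surfaceArea μ {x | s ≤ f x})) := fun s hs =>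
    tendsto_parallelQuotient (hcompact s hs) (hconvex s hs)
  refine ⟨fun t ht => hf.integrable_ballSup ht.le, fun s hs => ⟨hcompact s hs, hconvex s hs⟩,
    hlim, ?_⟩
  refine (tendsto_integral_nhdsGT_of_monotoneOn
    (fun t ht => hf.integrableOn_parallelQuotient (μ := μ) ht.le) ?_ ?_ ?_).congr' ?_
  · filter_upwards [ae_restrict_mem measurableSet_Ioi] with s hs t ht using
      parallelQuotient_nonneg (hcompact s hs) ht.le
  · filter_upwards [ae_restrict_mem measurableSet_Ioi] with s hs using
      monotoneOn_parallelQuotient (hcompact s hs) (hconvex s hs)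
  · filter_upwards [ae_restrict_mem measurableSet_Ioi] with s hs using hlim s hs
  · filter_upwards [self_mem_nhdsWithin] with t ht using
      hf.integral_parallelQuotient (mem_Ioi.1 ht).le

theorem stmt4 {n : ℕ} (hn : 1 ≤ n) (f : Euc n → ℝ) (hf : MemLC f) :
    (∀ t : ℝ, 0 < t → Integrable (indSup f (closedBall (0 : Euc n) 1) t)) ∧
    (∀ s : ℝ, 0 < s → IsCompact {x | s ≤ f x} ∧ Convex ℝ {x | s ≤ f x}) ∧
    ∃ S : ℝ → ℝ,
      (∀ s : ℝ, 0 < s →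
        Tendsto (fun t : ℝ =>
            ((volume ({x | s ≤ f x} + t • closedBall (0 : Euc n) 1)).toReal
              - (volume {x | s ≤ f x}).toReal) / t)
          (𝓝[>] (0 : ℝ)) (𝓝 (S s))) ∧
      ∃ w : ℝ, HasVarInd f (closedBall (0 : Euc n) 1) w ∧
        w = ∫ s in Ioi (0 : ℝ), S s := by
  obtain ⟨hint, hsuper, hlim, hvar⟩ :=
    stmt4_general volume ⟨hf.nonneg, hf.usc, hf.logConcave, hf.tendsto_zero⟩
  exact ⟨hint, hsuper, _, hlim, _, hvar, rfl⟩

end
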